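/- arXiv:1112.5157 — 4 statements merged into one kernel-verified Lean document; each statement's English description precedes it below -/
import Mathlib

section
/- Let G be a connected d-regular graph such that G² is not complete, let v be a vertex with deg₂(v) = 1, write N₂(v) = {u}, let G_v be the vertex set of the connected component of G − u containing v, and let t := |N(u) ∩ G_v|. Then: (1) G_v = {v} ∪ N(v), so |G_v| = d + 1; (2) the complement of the induced subgraph of G on G_v is a perfect matching on N(u) ∩ G_v (in particular every vertex of N(u) ∩ G_v has exactly d − 1 neighbors in G_v, and all other vertices of G_v have all d neighbors in G_v); (3) t ≤ d − 1; and (4) deg₂(w) = d − t + 1 for every w ∈ N(u) ∩ G_v. -/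
open SimpleGraph

variable {V : Type*}

/-- The set of vertices at distance exactly `i` from `v`. -/
def distSet (G : SimpleGraph V) (v : V) (i : ℕ) : Set V := {u | G.dist v u = i}

/-- `deg₂ v` : the number of vertices at distance exactly 2 from `v`. -/
noncomputable def deg2 (G : SimpleGraph V) (v : V) : ℕ := (distSet G v 2).ncard

/-- `N₂'(v)` : vertices at distance 2 from `v` that are adjacent to a vertex at
distance 3 from `v`. -/
def N2' (G : SimpleGraph V) (v : V) : Set V :=
  {u | G.dist v u = 2 ∧ ∃ w, G.dist v w = 3 ∧ G.Adj u w}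

/-- The square of `G` : an edge between `u` and `v` whenever `1 ≤ d(u,v) ≤ 2`. -/
def graphSquare (G : SimpleGraph V) : SimpleGraph V where
  Adj u v := 1 ≤ G.dist u v ∧ G.dist u v ≤ 2
  symm := by
    constructor
    intro u v h
    rwa [SimpleGraph.dist_comm]
  loopless := by
    constructor
    intro v h
    simp [SimpleGraph.dist_self] at h

/-- `G` is `d`-regular : every vertex has exactly `d` neighbors. -/
def IsRegularGraph (G : SimpleGraph V) (d : ℕ) : Prop :=
  ∀ v, (G.neighborSet v).ncard = d

/-- The vertex set of the connected component of `G - u` containing `v` :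
all vertices reachable from `v` by a walk avoiding `u`. -/
def compDel (G : SimpleGraph V) (u v : V) : Set V :=
  {w | ∃ p : G.Walk v w, u ∉ p.support}

/-- The complement of the induced subgraph of `G` on `S` is precisely a perfect matching
on `M ⊆ S` : there is a fixed-point-free involution `m` of `M` such that the non-adjacent
pairs of distinct vertices inside `S` are exactly the matched pairs. -/
def ComplIsMatchingOn (G : SimpleGraph V) (S M : Set V) : Prop :=
  M ⊆ S ∧ ∃ m : V → V,
    (∀ x ∈ M, m x ∈ M ∧ m x ≠ x ∧ m (m x) = x) ∧
    (∀ a ∈ S, ∀ b ∈ S, a ≠ b → (¬ G.Adj a b ↔ (a ∈ M ∧ b = m a)))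

/-!
The closed neighborhood `S` of `v` has `d + 1` vertices, and an edge leaving `S` can only end at
`u`; hence `S` is the component of `v` in `G - u`. A vertex of `S` therefore has `d` neighbors
inside `S` if it is not adjacent to `u` and `d - 1` if it is, so among the `d` other vertices of
`S` it misses none or exactly one. Missing pairs lie in `N(u)`, so they form a perfect matching
on `N(u) ∩ S`, and the vertices at distance two from `w ∈ N(u) ∩ S` are its partner and the
neighbors of `u` outside `S`. If `N(u) ⊆ S`, then `S ∪ {u}` is the whole graph, in which missing
pairs inside `S` have the common neighbor `u` and a vertex not adjacent to `u` is adjacent to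
every neighbor of `u`; so `G²` would be complete.
-/

variable {G : SimpleGraph V} {S M : Set V} {a b u v w x y : V}

theorem mem_distSet_two_iff :
    b ∈ distSet G a 2 ↔ Gᶜ.Adj a b ∧ (G.commonNeighbors a b).Nonempty := by
  have dist_iff_edist : G.dist a b = 2 ↔ G.edist a b = 2 :=
    ENat.toNat_eq_iff two_ne_zero
  rw [distSet, Set.mem_ofPred_eq, dist_iff_edist, edist_eq_two_iff, compl_adj, and_assoc]

theorem graphSquare_adj_iff :
    (graphSquare G).Adj a b ↔ G.Adj a b ∨ Gᶜ.Adj a b ∧ (G.commonNeighbors a b).Nonempty := by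
  rw [← mem_distSet_two_iff, ← G.dist_eq_one_iff_adj]
  change 1 ≤ G.dist a b ∧ G.dist a b ≤ 2 ↔ G.dist a b = 1 ∨ G.dist a b = 2
  lia

theorem ncard_neighborSet_inter_add_ncard_compl_neighborSet_inter (hfin : S.Finite) (hw : w ∈ S) :
    (G.neighborSet w ∩ S).ncard + (Gᶜ.neighborSet w ∩ S).ncard + 1 = S.ncard := by
  have sdiff_eq : S \ G.neighborSet w = insert w (Gᶜ.neighborSet w ∩ S) := by
    ext x
    simp only [Set.mem_sdiff, mem_neighborSet, Set.mem_insert_iff, Set.mem_inter_iff, compl_adj]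
    by_cases hx : x = w
    · simp [hx, hw]
    · simp [hx, Ne.symm hx, and_comm]
  rw [← Set.ncard_inter_add_ncard_sdiff_eq_ncard S (G.neighborSet w) hfin, sdiff_eq,
    Set.ncard_insert_of_notMem (by simp) (hfin.inter_of_right _), Set.inter_comm, add_assoc]

theorem complIsMatchingOn_of_ncard_compl_neighborSet_inter (hMS : M ⊆ S)
    (hM : ∀ w ∈ M, (Gᶜ.neighborSet w ∩ S).ncard = 1)
    (hmem : ∀ x ∈ S, ∀ y ∈ S, Gᶜ.Adj x y → x ∈ M) : ComplIsMatchingOn G S M := by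
  have exists_partner : ∀ w, ∃ y, w ∈ M → Gᶜ.neighborSet w ∩ S = {y} := fun w ↦ by
    by_cases hw : w ∈ M
    · exact (Set.ncard_eq_one.mp (hM w hw)).imp fun _ hy _ ↦ hy
    · exact ⟨w, fun h ↦ absurd h hw⟩
  choose m hm using exists_partner
  have partner_spec : ∀ x ∈ M, Gᶜ.Adj x (m x) ∧ m x ∈ S := fun x hx ↦
    (hm x hx).superset rfl
  have eq_partner : ∀ x ∈ M, ∀ y ∈ S, Gᶜ.Adj x y → y = m x := fun x hx y hy hxy ↦
    (hm x hx).subset ⟨hxy, hy⟩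
  refine ⟨hMS, m, fun x hx ↦ ?_, fun a ha b hb hab ↦ ⟨fun hnadj ↦ ?_, ?_⟩⟩
  · obtain ⟨hadj, hmS⟩ := partner_spec x hx
    have hmM : m x ∈ M := hmem (m x) hmS x (hMS hx) hadj.symm
    exact ⟨hmM, hadj.ne', (eq_partner (m x) hmM x (hMS hx) hadj.symm).symm⟩
  · have hcompl : Gᶜ.Adj a b := (compl_adj ..).mpr ⟨hab, hnadj⟩
    have haM : a ∈ M := hmem a ha b hb hcompl
    exact ⟨haM, eq_partner a haM b hb hcompl⟩
  · rintro ⟨haM, rfl⟩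
    exact ((compl_adj ..).mp (partner_spec a haM).1).2

/-- `S` is cut off by `u` if it avoids `u` and every edge leaving `S` ends at `u`; equivalently, `S`
is a union of connected components of `G - u`. The local structure of a component `G_v` of `G - u`
depends on this property and on vertex degrees only. -/
structure IsCutOffBy (G : SimpleGraph V) (u : V) (S : Set V) : Prop where
  notMem : u ∉ S
  mem_of_adj : ∀ {x y : V}, x ∈ S → G.Adj x y → y ≠ u → y ∈ S

theorem isCutOffBy_singleton_union_neighborSet (hN2 : distSet G v 2 = {u}) :
    IsCutOffBy G u ({v} ∪ G.neighborSet v) where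
  notMem := by
    have hvu : Gᶜ.Adj v u := (mem_distSet_two_iff.mp (hN2.superset rfl)).1
    rintro (rfl | hadj)
    · exact hvu.ne rfl
    · exact ((compl_adj ..).mp hvu).2 hadj
  mem_of_adj := by
    rintro x y (rfl | hvx) hxy hyu
    · exact Or.inr hxy
    · by_contra hy
      obtain ⟨hyv, hvy⟩ := not_or.mp hy
      have hdist : y ∈ distSet G v 2 :=
        mem_distSet_two_iff.mpr ⟨(compl_adj ..).mpr ⟨Ne.symm hyv, hvy⟩, x, hvx, hxy.symm⟩
      exact hyu (hN2.subset hdist)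

theorem singleton_union_neighborSet_subset_compDel (hvu : v ≠ u) (hadj : ¬ G.Adj v u) :
    {v} ∪ G.neighborSet v ⊆ compDel G u v := by
  rintro x (rfl | (hvx : G.Adj v x))
  · exact ⟨Walk.nil, by simpa using hvu.symm⟩
  · have hux : u ≠ x := fun h ↦ hadj (h ▸ hvx)
    exact ⟨hvx.toWalk, by simp [hvu.symm, hux]⟩

namespace IsCutOffBy

theorem compDel_subset (hS : IsCutOffBy G u S) (hv : v ∈ S) : compDel G u v ⊆ S := by
  rintro x ⟨p, hp⟩
  by_contra hx
  obtain ⟨e, he, hfst, hsnd⟩ := p.exists_boundary_dart S hv hx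
  have hne : e.snd ≠ u := fun h ↦ hp (h ▸ p.dart_snd_mem_support_of_mem_darts he)
  exact hsnd (hS.mem_of_adj hfst e.adj hne)

theorem exists_mem_adj (hS : IsCutOffBy G u S) (hconn : G.Preconnected) (hne : S.Nonempty) :
    ∃ c ∈ S, G.Adj u c := by
  obtain ⟨x, hx⟩ := hne
  obtain ⟨p⟩ := hconn x u
  obtain ⟨e, -, hfst, hsnd⟩ := p.exists_boundary_dart S hx hS.notMem
  have hsnd_eq : e.snd = u := by_contra fun h ↦ hsnd (hS.mem_of_adj hfst e.adj h)
  exact ⟨e.fst, hfst, hsnd_eq ▸ e.adj.symm⟩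

theorem eq_or_mem_of_neighborSet_subset (hS : IsCutOffBy G u S) (hconn : G.Preconnected)
    (hsub : G.neighborSet u ⊆ S) (x : V) : x = u ∨ x ∈ S := by
  by_contra hx
  obtain ⟨p⟩ := hconn u x
  obtain ⟨e, -, hfst, hsnd⟩ := p.exists_boundary_dart (insert u S) (Set.mem_insert u S) hx
  obtain ⟨hne, hmem⟩ := not_or.mp hsnd
  rcases hfst with hfst | hfst
  · exact hmem (hsub (hfst ▸ e.adj))
  · exact hmem (hS.mem_of_adj hfst e.adj hne)

theorem neighborSet_inter (hS : IsCutOffBy G u S) (hw : w ∈ S) :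
    G.neighborSet w ∩ S = G.neighborSet w \ {u} := by
  ext x
  exact ⟨fun ⟨hwx, hx⟩ ↦ ⟨hwx, fun h ↦ hS.notMem (h ▸ hx)⟩,
    fun ⟨hwx, hxu⟩ ↦ ⟨hwx, hS.mem_of_adj hw hwx hxu⟩⟩

theorem ncard_neighborSet_inter_of_not_adj (hS : IsCutOffBy G u S) (hw : w ∈ S)
    (huw : ¬ G.Adj u w) : (G.neighborSet w ∩ S).ncard = (G.neighborSet w).ncard := by
  have hu : u ∉ G.neighborSet w := fun h ↦ huw h.symm
  rw [hS.neighborSet_inter hw, Set.sdiff_singleton_eq_self hu]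

theorem ncard_neighborSet_inter_add_one_of_adj (hS : IsCutOffBy G u S) (hw : w ∈ S)
    (huw : G.Adj u w) (hfin : (G.neighborSet w).Finite) :
    (G.neighborSet w ∩ S).ncard + 1 = (G.neighborSet w).ncard := by
  rw [hS.neighborSet_inter hw,
    Set.ncard_sdiff_singleton_add_one (show u ∈ G.neighborSet w from huw.symm) hfin]

theorem finite_neighborSet (hS : IsCutOffBy G u S) (hfin : S.Finite) (hw : w ∈ S) :
    (G.neighborSet w).Finite :=
  (hfin.insert u).subset fun _ hx ↦ or_iff_not_imp_left.mpr (hS.mem_of_adj hw hx)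

theorem ncard_compl_neighborSet_inter (hS : IsCutOffBy G u S) (hw : w ∈ S) (huw : G.Adj u w)
    (hdeg : (G.neighborSet w).ncard + 1 = S.ncard) : (Gᶜ.neighborSet w ∩ S).ncard = 1 := by
  have hfin : S.Finite := Set.finite_of_ncard_ne_zero (by lia)
  have hinside := hS.ncard_neighborSet_inter_add_one_of_adj hw huw (hS.finite_neighborSet hfin hw)
  have hsplit := ncard_neighborSet_inter_add_ncard_compl_neighborSet_inter (G := G) hfin hw
  lia

theorem adj_of_compl_adj (hS : IsCutOffBy G u S) (hx : x ∈ S) (hy : y ∈ S) (hxy : Gᶜ.Adj x y)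
    (hdeg : (G.neighborSet x).ncard + 1 = S.ncard) : G.Adj u x := by
  by_contra hux
  have hfin : S.Finite := Set.finite_of_ncard_ne_zero (by lia)
  have hinside := hS.ncard_neighborSet_inter_of_not_adj hx hux
  have hsplit := ncard_neighborSet_inter_add_ncard_compl_neighborSet_inter (G := G) hfin hx
  have hpos : 0 < (Gᶜ.neighborSet x ∩ S).ncard :=
    (Set.ncard_pos (hfin.inter_of_right _)).mpr ⟨y, hxy, hy⟩
  lia

theorem complIsMatchingOn (hS : IsCutOffBy G u S)
    (hdeg : ∀ w ∈ S, (G.neighborSet w).ncard + 1 = S.ncard) :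
    ComplIsMatchingOn G S (G.neighborSet u ∩ S) :=
  complIsMatchingOn_of_ncard_compl_neighborSet_inter Set.inter_subset_right
    (fun w ⟨huw, hw⟩ ↦ hS.ncard_compl_neighborSet_inter hw huw (hdeg w hw))
    (fun x hx _ hy hxy ↦ ⟨hS.adj_of_compl_adj hx hy hxy (hdeg x hx), hx⟩)

theorem distSet_two_eq (hS : IsCutOffBy G u S) (hw : w ∈ S) (huw : G.Adj u w)
    (hsub : Gᶜ.neighborSet w ∩ S ⊆ G.neighborSet u) :
    distSet G w 2 = Gᶜ.neighborSet w ∩ S ∪ G.neighborSet u \ S := by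
  ext x
  rw [mem_distSet_two_iff]
  constructor
  · rintro ⟨hwx, c, hwc, hxc⟩
    by_cases hx : x ∈ S
    · exact Or.inl ⟨hwx, hx⟩
    · have hxu : x ≠ u := fun h ↦ ((compl_adj ..).mp hwx).2 (h ▸ huw.symm)
      have hcS : c ∉ S := fun hc ↦ hx (hS.mem_of_adj hc hxc.symm hxu)
      have hcu : c = u := by_contra fun h ↦ hcS (hS.mem_of_adj hw hwc h)
      exact Or.inr ⟨hcu ▸ hxc.symm, hx⟩
  · rintro (hx | ⟨hux, hx⟩)
    · exact ⟨hx.1, u, huw.symm, (hsub hx).symm⟩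
    · have hwx : Gᶜ.Adj w x := (compl_adj ..).mpr
        ⟨fun h ↦ hx (h ▸ hw), fun hadj ↦ hx (hS.mem_of_adj hw hadj hux.ne')⟩
      exact ⟨hwx, u, huw.symm, hux.symm⟩

theorem deg2_eq (hS : IsCutOffBy G u S) (hdeg : ∀ w ∈ S, (G.neighborSet w).ncard + 1 = S.ncard)
    (hw : w ∈ S) (huw : G.Adj u w) (hfin : (G.neighborSet u).Finite) :
    deg2 G w = (G.neighborSet u \ S).ncard + 1 := by
  have hone := hS.ncard_compl_neighborSet_inter hw huw (hdeg w hw)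
  have hsub : Gᶜ.neighborSet w ∩ S ⊆ G.neighborSet u := fun x ⟨hwx, hx⟩ ↦
    hS.adj_of_compl_adj hx hw hwx.symm (hdeg x hx)
  have hdisj : Disjoint (Gᶜ.neighborSet w ∩ S) (G.neighborSet u \ S) :=
    Set.disjoint_sdiff_right.mono_left Set.inter_subset_right
  rw [deg2, hS.distSet_two_eq hw huw hsub,
    Set.ncard_union_eq hdisj (Set.finite_of_ncard_pos (by lia)) hfin.sdiff, hone, add_comm]

theorem graphSquare_eq_top (hS : IsCutOffBy G u S)
    (hdeg : ∀ w ∈ S, (G.neighborSet w).ncard + 1 = S.ncard) (hconn : G.Preconnected)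
    (hne : S.Nonempty) (hsub : G.neighborSet u ⊆ S) : graphSquare G = ⊤ := by
  obtain ⟨c, hc, huc⟩ := hS.exists_mem_adj hconn hne
  have adj_of_mem : ∀ x ∈ S, (graphSquare G).Adj u x := fun x hx ↦ by
    by_cases hux : G.Adj u x
    · exact graphSquare_adj_iff.mpr (Or.inl hux)
    · have hcompl : Gᶜ.Adj u x := (compl_adj ..).mpr ⟨fun h ↦ hS.notMem (h ▸ hx), hux⟩
      have hxc : G.Adj x c := by
        by_contra hxc
        have hxc_compl : Gᶜ.Adj x c := (compl_adj ..).mpr ⟨fun h ↦ hux (h ▸ huc), hxc⟩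
        exact hux (hS.adj_of_compl_adj hx hc hxc_compl (hdeg x hx))
      exact graphSquare_adj_iff.mpr (Or.inr ⟨hcompl, c, huc, hxc⟩)
  have adj_of_mem_of_mem : ∀ x ∈ S, ∀ y ∈ S, x ≠ y → (graphSquare G).Adj x y :=
    fun x hx y hy hxy ↦ by
      refine graphSquare_adj_iff.mpr (or_iff_not_imp_left.mpr fun hnadj ↦ ?_)
      have hcompl : Gᶜ.Adj x y := (compl_adj ..).mpr ⟨hxy, hnadj⟩
      exact ⟨hcompl, u, (hS.adj_of_compl_adj hx hy hcompl (hdeg x hx)).symm,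
        (hS.adj_of_compl_adj hy hx hcompl.symm (hdeg y hy)).symm⟩
  refine eq_top_iff.mpr fun a b hab ↦ ?_
  rcases hS.eq_or_mem_of_neighborSet_subset hconn hsub a with rfl | ha <;>
    rcases hS.eq_or_mem_of_neighborSet_subset hconn hsub b with rfl | hb
  · exact absurd rfl hab.ne
  · exact adj_of_mem b hb
  · exact (adj_of_mem a ha).symm
  · exact adj_of_mem_of_mem a ha b hb hab.ne

theorem ncard_neighborSet_inter_lt (hS : IsCutOffBy G u S)
    (hdeg : ∀ w ∈ S, (G.neighborSet w).ncard + 1 = S.ncard) (hconn : G.Preconnected)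
    (hne : S.Nonempty) (hnotcomplete : graphSquare G ≠ ⊤) (hfin : (G.neighborSet u).Finite) :
    (G.neighborSet u ∩ S).ncard < (G.neighborSet u).ncard :=
  Set.ncard_lt_ncard (Set.inter_ssubset_left_iff.mpr fun hsub ↦
    hnotcomplete (hS.graphSquare_eq_top hdeg hconn hne hsub)) hfin

end IsCutOffBy

theorem compDel_eq_of_distSet_two (hN2 : distSet G v 2 = {u}) :
    compDel G u v = {v} ∪ G.neighborSet v := by
  have hvu : Gᶜ.Adj v u := (mem_distSet_two_iff.mp (hN2.superset rfl)).1
  exact ((isCutOffBy_singleton_union_neighborSet hN2).compDel_subset (Or.inl rfl)).antisymm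
    (singleton_union_neighborSet_subset_compDel hvu.ne ((compl_adj ..).mp hvu).2)

theorem ncard_singleton_union_neighborSet (hfin : (G.neighborSet v).Finite) :
    ({v} ∪ G.neighborSet v).ncard = (G.neighborSet v).ncard + 1 := by
  rw [Set.singleton_union, Set.ncard_insert_of_notMem G.notMem_neighborSet_self hfin]

theorem stmt7_general {V : Type*} (G : SimpleGraph V) (d : ℕ)
    (hfin : ∀ w, (G.neighborSet w).Finite) (hconn : G.Connected) (hreg : IsRegularGraph G d)
    (hnotcomplete : graphSquare G ≠ ⊤) (v u : V) (hN2 : distSet G v 2 = {u}) :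
    (compDel G u v = {v} ∪ G.neighborSet v ∧ (compDel G u v).ncard = d + 1) ∧
    (ComplIsMatchingOn G (compDel G u v) (G.neighborSet u ∩ compDel G u v) ∧
      (∀ w ∈ G.neighborSet u ∩ compDel G u v,
        (G.neighborSet w ∩ compDel G u v).ncard = d - 1) ∧
      (∀ w ∈ compDel G u v, w ∉ G.neighborSet u →
        (G.neighborSet w ∩ compDel G u v).ncard = d)) ∧
    (G.neighborSet u ∩ compDel G u v).ncard ≤ d - 1 ∧
    (∀ w ∈ G.neighborSet u ∩ compDel G u v,
      deg2 G w = d - (G.neighborSet u ∩ compDel G u v).ncard + 1) := by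
  have hcomp := compDel_eq_of_distSet_two hN2
  have hS : IsCutOffBy G u (compDel G u v) :=
    hcomp ▸ isCutOffBy_singleton_union_neighborSet hN2
  have hcard : (compDel G u v).ncard = d + 1 := by
    rw [hcomp, ncard_singleton_union_neighborSet (hfin v), hreg v]
  have hdeg : ∀ w ∈ compDel G u v, (G.neighborSet w).ncard + 1 = (compDel G u v).ncard :=
    fun w _ ↦ by rw [hreg w, hcard]
  have hlt := hS.ncard_neighborSet_inter_lt hdeg hconn.preconnected
    (Set.nonempty_of_ncard_ne_zero (by lia)) hnotcomplete (hfin u)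
  have hout := Set.ncard_inter_add_ncard_sdiff_eq_ncard (G.neighborSet u) (compDel G u v) (hfin u)
  rw [hreg u] at hlt hout
  refine ⟨⟨hcomp, hcard⟩, ⟨hS.complIsMatchingOn hdeg, fun w ⟨huw, hw⟩ ↦ ?_, fun w hw huw ↦ ?_⟩,
    Nat.le_sub_one_of_lt hlt, fun w ⟨huw, hw⟩ ↦ ?_⟩
  · rw [← hreg w, ← hS.ncard_neighborSet_inter_add_one_of_adj hw huw (hfin w), Nat.add_sub_cancel]
  · rw [hS.ncard_neighborSet_inter_of_not_adj hw huw, hreg w]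
  · rw [hS.deg2_eq hdeg hw huw (hfin u), ← hout, Nat.add_sub_cancel_left]

/-- Let `G` be connected `d`-regular with `G²` not complete, `v` a vertex
with `deg₂(v) = 1` and `N₂(v) = {u}`, `G_v` the component of `G - u` containing `v`, and
`t = |N(u) ∩ G_v|`. Then (1) `G_v = {v} ∪ N(v)` and `|G_v| = d + 1`; (2) the complement of
the induced subgraph on `G_v` is a perfect matching on `N(u) ∩ G_v` (in particular every
vertex of `N(u) ∩ G_v` has exactly `d - 1` neighbors in `G_v` and every other vertex of
`G_v` has all `d` neighbors in `G_v`); (3) `t ≤ d - 1`; (4) `deg₂(w) = d - t + 1` for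
every `w ∈ N(u) ∩ G_v`. -/
theorem stmt7 {V : Type*} [Fintype V] (G : SimpleGraph V) (d : ℕ)
    (hconn : G.Connected) (hreg : IsRegularGraph G d) (hnotcomplete : graphSquare G ≠ ⊤)
    (v u : V) (hv : deg2 G v = 1) (hN2 : distSet G v 2 = {u}) :
    (compDel G u v = {v} ∪ G.neighborSet v ∧ (compDel G u v).ncard = d + 1) ∧
    (ComplIsMatchingOn G (compDel G u v) (G.neighborSet u ∩ compDel G u v) ∧
      (∀ w ∈ G.neighborSet u ∩ compDel G u v,
        (G.neighborSet w ∩ compDel G u v).ncard = d - 1) ∧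
      (∀ w ∈ compDel G u v, w ∉ G.neighborSet u →
        (G.neighborSet w ∩ compDel G u v).ncard = d)) ∧
    (G.neighborSet u ∩ compDel G u v).ncard ≤ d - 1 ∧
    (∀ w ∈ G.neighborSet u ∩ compDel G u v,
      deg2 G w = d - (G.neighborSet u ∩ compDel G u v).ncard + 1) :=
  stmt7_general G d (fun _ ↦ Set.toFinite _) hconn hreg hnotcomplete v u hN2
end

section
/- Let G be a connected d-regular graph such that G² is not complete, let v be a vertex with deg₂(v) = 1, write N₂(v) = {u}, and let G_v be the vertex set of the connected component of G − u containing v. Then |N(u) ∩ G_v| is even; in particular, if |N(u) ∩ G_v| = d − 1, then d is odd (so B regions exist only when d is odd). -/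
open SimpleGraph

variable {V : Type*}

/-!
As `u` is the only vertex at distance 2 from `v`, every edge leaving the closed neighborhood of `v`
ends at `u`, so `G_v` is that closed neighborhood. It consists of `d + 1` vertices of degree `d`;
summing their degrees counts each of the `e` edges inside `G_v` twice and each edge to `u` once, so
`(d + 1) * d = 2 * e + |N(u) ∩ G_v|`, whose left-hand side is even.
-/

section DegreeSum

variable (G : SimpleGraph V) [LocallyFinite G] [DecidableEq V]

lemma even_sum_card_neighborFinset_inter (s : Finset V) :
    Even (∑ a ∈ s, (G.neighborFinset a ∩ s).card) := by
  classical
  have hdegree (a : s) : (G.induce (s : Set V)).degree a = (G.neighborFinset a ∩ s).card := by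
    rw [← card_neighborFinset_eq_degree, ← Finset.card_map (.subtype (· ∈ (s : Set V)))]
    congr 1
    ext b
    simp [and_comm]
  rw [← Finset.sum_coe_sort, ← Finset.sum_congr rfl fun a _ ↦ hdegree a]
  exact (G.induce (s : Set V)).sum_degrees_eq_twice_card_edges ▸ even_two_mul _

variable {G} {s : Finset V} {u : V}

lemma degree_eq_card_inter_add_ite {a : V} (hu : u ∉ s) (ha : G.neighborFinset a ⊆ insert u s) :
    G.degree a = (G.neighborFinset a ∩ s).card + if a ∈ G.neighborFinset u then 1 else 0 := by
  calc
    G.degree a = (G.neighborFinset a ∩ insert u s).card := by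
      rw [Finset.inter_eq_left.2 ha, card_neighborFinset_eq_degree]
    _ = (G.neighborFinset a ∩ s).card + if a ∈ G.neighborFinset u then 1 else 0 := by
      by_cases hua : G.Adj u a
      · rw [Finset.inter_insert_of_mem (by simpa using hua.symm),
          Finset.card_insert_of_notMem (by simp [hu]), if_pos (by simpa using hua)]
      · rw [Finset.inter_insert_of_notMem (by simpa [adj_comm] using hua),
          if_neg (by simpa using hua), add_zero]

lemma sum_degree_eq_sum_card_inter_add (hu : u ∉ s)
    (hs : ∀ a ∈ s, G.neighborFinset a ⊆ insert u s) :
    ∑ a ∈ s, G.degree a =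
      ∑ a ∈ s, (G.neighborFinset a ∩ s).card + (G.neighborFinset u ∩ s).card := by
  rw [Finset.sum_congr rfl fun a ha ↦ degree_eq_card_inter_add_ite hu (hs a ha),
    Finset.sum_add_distrib, ← Finset.card_filter, Finset.filter_mem_eq_inter, Finset.inter_comm s]

lemma even_card_neighborFinset_inter_iff (hu : u ∉ s)
    (hs : ∀ a ∈ s, G.neighborFinset a ⊆ insert u s) :
    Even (G.neighborFinset u ∩ s).card ↔ Even (∑ a ∈ s, G.degree a) := by
  rw [sum_degree_eq_sum_card_inter_add hu hs, Nat.even_add]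
  simp only [even_sum_card_neighborFinset_inter, true_iff]

end DegreeSum

section CompDel

variable {G : SimpleGraph V} {u v : V}

lemma notMem_compDel_self : u ∉ compDel G u v :=
  fun ⟨p, hp⟩ ↦ hp p.end_mem_support

lemma neighborSet_subset_insert_compDel {a : V} (ha : a ∈ compDel G u v) :
    G.neighborSet a ⊆ insert u (compDel G u v) := by
  obtain ⟨p, hp⟩ := ha
  intro b (hab : G.Adj a b)
  refine or_iff_not_imp_left.2 fun hbu ↦ ⟨p.concat hab, ?_⟩
  simp [Walk.support_concat, hp, Ne.symm hbu]

lemma compDel_subset {S : Set V} (hv : v ∈ S) (hS : ∀ a ∈ S, G.neighborSet a ⊆ insert u S) :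
    compDel G u v ⊆ S := by
  rintro w ⟨p, hp⟩
  by_contra hw
  obtain ⟨e, he, hfst, hsnd⟩ := p.exists_boundary_dart S hv hw
  have hu : e.snd = u := (hS e.fst hfst e.adj).resolve_right hsnd
  exact hp (hu ▸ p.dart_snd_mem_support_of_mem_darts he)

lemma insert_neighborSet_subset_compDel (huv : u ≠ v) (hadj : ¬ G.Adj v u) :
    insert v (G.neighborSet v) ⊆ compDel G u v := by
  have hv : v ∈ compDel G u v := ⟨Walk.nil, by simpa using huv⟩
  refine Set.insert_subset hv fun w hw ↦ (neighborSet_subset_insert_compDel hv hw).resolve_left ?_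
  rintro rfl
  exact hadj hw

lemma mem_distSet_two_iff_s8 {w : V} :
    w ∈ distSet G v 2 ↔ v ≠ w ∧ ¬ G.Adj v w ∧ (G.commonNeighbors v w).Nonempty := by
  rw [← edist_eq_two_iff]
  exact ENat.toNat_eq_iff two_ne_zero

lemma neighborSet_subset_insert_of_distSet_two_subset (hN2 : distSet G v 2 ⊆ {u}) {a : V}
    (ha : a ∈ insert v (G.neighborSet v)) :
    G.neighborSet a ⊆ insert u (insert v (G.neighborSet v)) := by
  intro b hab
  rcases ha with rfl | hva
  · exact .inr (.inr hab)
  · refine or_iff_not_imp_right.2 fun hb ↦ hN2 (mem_distSet_two_iff_s8.2 ?_)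
    rw [Set.mem_insert_iff, not_or] at hb
    exact ⟨Ne.symm hb.1, hb.2, a, hva, Adj.symm hab⟩

lemma compDel_eq_insert_neighborSet (hN2 : distSet G v 2 = {u}) :
    compDel G u v = insert v (G.neighborSet v) := by
  obtain ⟨hvu, hadj, -⟩ := mem_distSet_two_iff_s8.1 (hN2 ▸ Set.mem_singleton u)
  refine (compDel_subset (Set.mem_insert v _) fun a ha ↦ ?_).antisymm
    (insert_neighborSet_subset_compDel hvu.symm hadj)
  exact neighborSet_subset_insert_of_distSet_two_subset hN2.subset ha

lemma degree_pos_of_mem_distSet_two [Fintype (G.neighborSet v)] {w : V}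
    (hw : w ∈ distSet G v 2) : 0 < G.degree v := by
  obtain ⟨-, -, a, ha, -⟩ := mem_distSet_two_iff_s8.1 hw
  exact (G.degree_pos_iff_exists_adj v).2 ⟨a, ha⟩

end CompDel

section Regular

variable {G : SimpleGraph V} [LocallyFinite G] {d : ℕ} {u v : V}

lemma IsRegularGraph.isRegularOfDegree (hreg : IsRegularGraph G d) : G.IsRegularOfDegree d := by
  intro a
  rw [← hreg a, ← card_neighborSet_eq_degree, Set.ncard_eq_toFinset_card', Set.toFinset_card]

lemma IsRegularGraph.even_ncard_neighborSet_inter_compDel (hreg : IsRegularGraph G d)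
    (hN2 : distSet G v 2 = {u}) : Even (G.neighborSet u ∩ compDel G u v).ncard := by
  classical
  let s : Finset V := insert v (G.neighborFinset v)
  have hs : (s : Set V) = compDel G u v := by
    rw [compDel_eq_insert_neighborSet hN2, Finset.coe_insert, coe_neighborFinset]
  have hus : u ∉ s := by
    rw [← Finset.mem_coe, hs]
    exact notMem_compDel_self
  have hclosed : ∀ a ∈ s, G.neighborFinset a ⊆ insert u s := by
    intro a ha
    rw [← Finset.coe_subset, Finset.coe_insert, coe_neighborFinset, hs]
    exact neighborSet_subset_insert_compDel (hs ▸ ha)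
  have hsum : ∑ a ∈ s, G.degree a = (d + 1) * d := by
    rw [Finset.sum_congr rfl fun a _ ↦ hreg.isRegularOfDegree a, Finset.sum_const,
      Finset.card_insert_of_notMem (G.notMem_neighborFinset_self v),
      card_neighborFinset_eq_degree, hreg.isRegularOfDegree v, smul_eq_mul]
  rw [← hs, ← coe_neighborFinset, ← Finset.coe_inter, Set.ncard_coe_finset,
    even_card_neighborFinset_inter_iff hus hclosed, hsum, mul_comm]
  exact Nat.even_mul_succ_self d

theorem stmt8_general (hreg : IsRegularGraph G d) (hN2 : distSet G v 2 = {u}) :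
    Even (G.neighborSet u ∩ compDel G u v).ncard ∧
      ((G.neighborSet u ∩ compDel G u v).ncard = d - 1 → Odd d) := by
  have heven := hreg.even_ncard_neighborSet_inter_compDel hN2
  refine ⟨heven, fun hcard ↦ ?_⟩
  have hd : 0 < d :=
    hreg.isRegularOfDegree v ▸ degree_pos_of_mem_distSet_two (hN2 ▸ Set.mem_singleton u)
  rw [hcard] at heven
  exact Nat.sub_add_cancel hd ▸ heven.add_one

end Regular

/-- Let `G` be connected `d`-regular with `G²` not complete, `v` a vertex
with `deg₂(v) = 1` and `N₂(v) = {u}`, and `G_v` the component of `G - u` containing `v`.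
Then `|N(u) ∩ G_v|` is even; in particular if `|N(u) ∩ G_v| = d - 1` then `d` is odd
(so B regions exist only for odd `d`). -/
theorem stmt8 {V : Type*} [Fintype V] (G : SimpleGraph V) (d : ℕ)
    (hconn : G.Connected) (hreg : IsRegularGraph G d) (hnotcomplete : graphSquare G ≠ ⊤)
    (v u : V) (hv : deg2 G v = 1) (hN2 : distSet G v 2 = {u}) :
    Even ((G.neighborSet u ∩ compDel G u v).ncard) ∧
      ((G.neighborSet u ∩ compDel G u v).ncard = d - 1 → Odd d) := by
  classical
  exact stmt8_general hreg hN2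
end

section
/- Let d > 6 be odd, let G be a connected d-regular graph such that G² is not complete, and let T and T' be tails of G with T ∩ T' ≠ ∅. Then either G is a snake graph, or one of T and T' is contained in the other. -/
/-!
The edge `w_T u_T` is the only edge of `G` leaving `T`, hence a bridge of `G`. If `T'` meets
both `T` and its complement, then, since `T'` is also cut off by a single edge, this bridge has
both ends in `T'`. No edge inside a segment is a bridge, because it lies on a triangle or a
4-cycle, so `w_T u_T` is one of the edges linking consecutive segments of `T'`. The segments of
`T'` up to that link form a tail `T'_i` whose only leaving edge is the same bridge. In a
connected graph a vertex set is determined by its only leaving edge, taken with its orientation;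
so `T'_i` equals `T`, which is then contained in `T'`, or the complement of `T`, and `G` is a
snake graph.
-/

open SimpleGraph

variable {V : Type*}

/-- A tail with `k ≥ 1` segments in the graph `G` (for degree `d`). -/
structure Tail (G : SimpleGraph V) (d : ℕ) where
  /-- the vertex set of the tail -/
  carrier : Set V
  /-- the number of segments -/
  k : ℕ
  /-- the segments `R₁, …, R_k` -/
  seg : ℕ → Set V
  /-- the vertex `v` of the first segment with `deg₂ v = 1` -/
  v0 : V
  /-- the vertex `u` with `N₂(v) = {u}` -/
  u0 : V
  /-- the endpoints `v_i` of the removed edges of later segments -/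
  vt : ℕ → V
  /-- the endpoints `v_i'` of the removed edges of later segments -/
  vt' : ℕ → V
  /-- the unique vertex `w_T` of the tail having a neighbor outside the tail -/
  w : V
  /-- the unique neighbor `u_T` of `w_T` outside the tail -/
  uT : V
  k_pos : 1 ≤ k
  carrier_eq : carrier = ⋃ i ∈ Set.Icc 1 k, seg i
  seg_disj : ∀ i ∈ Set.Icc 1 k, ∀ j ∈ Set.Icc 1 k, i ≠ j → Disjoint (seg i) (seg j)
  seg1 : seg 1 = {v0} ∪ G.neighborSet v0 ∪ {u0}
  seg1_card : (seg 1).ncard = d + 2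
  deg2_v0 : deg2 G v0 = 1
  dist2_v0 : distSet G v0 2 = {u0}
  u0_nbrs : (G.neighborSet u0 ∩ G.neighborSet v0).ncard = d - 1
  compl_matching :
    ComplIsMatchingOn G ({v0} ∪ G.neighborSet v0) (G.neighborSet u0 ∩ G.neighborSet v0)
  seg_card : ∀ i ∈ Set.Icc 2 k, (seg i).ncard = d + 1
  vt_mem : ∀ i ∈ Set.Icc 2 k, vt i ∈ seg i
  vt'_mem : ∀ i ∈ Set.Icc 2 k, vt' i ∈ seg i
  vt_ne : ∀ i ∈ Set.Icc 2 k, vt i ≠ vt' i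
  seg_adj : ∀ i ∈ Set.Icc 2 k, ∀ a ∈ seg i, ∀ b ∈ seg i, a ≠ b →
    (G.Adj a b ↔ ({a, b} : Set V) ≠ {vt i, vt' i})
  inter_seg : ∀ i ∈ Set.Icc 1 k, ∀ j ∈ Set.Icc 1 k, i ≠ j → ∀ a ∈ seg i, ∀ b ∈ seg j,
    (G.Adj a b ↔ ((i = 1 ∧ j = 2 ∧ a = u0 ∧ b = vt 2) ∨
                  (j = 1 ∧ i = 2 ∧ b = u0 ∧ a = vt 2) ∨
                  (i + 1 = j ∧ 2 ≤ i ∧ a = vt' i ∧ b = vt j) ∨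
                  (j + 1 = i ∧ 2 ≤ j ∧ b = vt' j ∧ a = vt i)))
  w_eq_of_k_ge_two : 2 ≤ k → w = vt' k
  w_eq_of_k_eq_one : k = 1 → w = u0
  w_mem : w ∈ carrier
  uT_not_mem : uT ∉ carrier
  w_adj_uT : G.Adj w uT
  w_unique_out : ∀ b, G.Adj w b → b ∉ carrier → b = uT
  others_in : ∀ a ∈ carrier, a ≠ w → ∀ b, G.Adj a b → b ∈ carrier

/-- A tail is proper if it is not contained in a strictly larger tail. -/
def IsProperTail (G : SimpleGraph V) (d : ℕ) (t : Tail G d) : Prop :=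
  ∀ t' : Tail G d, t.carrier ⊆ t'.carrier → t.carrier = t'.carrier

/-- A snake graph : a connected `d`-regular graph which is the disjoint union of two tails,
the only edge joining them being `w_T w_{T'}`. -/
def IsSnake (G : SimpleGraph V) (d : ℕ) : Prop :=
  G.Connected ∧ IsRegularGraph G d ∧
  ∃ t t' : Tail G d,
    Disjoint t.carrier t'.carrier ∧
    t.carrier ∪ t'.carrier = Set.univ ∧
    t.uT = t'.w ∧ t'.uT = t.w ∧
    (∀ a ∈ t.carrier, ∀ b ∈ t'.carrier, G.Adj a b → a = t.w ∧ b = t'.w)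

section Bridges

variable {G : SimpleGraph V} {x y z a b : V}

theorem not_isBridge_of_adj_adj (hxz : G.Adj x z) (hzy : G.Adj z y) : ¬ G.IsBridge s(x, y) := by
  rw [isBridge_iff_forall_walk_mem_edges, not_forall]
  refine ⟨.cons hxz (.cons hzy .nil), ?_⟩
  simp [hzy.ne', hxz.ne]

theorem not_isBridge_of_adj_adj_adj (hxa : G.Adj x a) (hab : G.Adj a b) (hby : G.Adj b y)
    (hay : a ≠ y) (hbx : b ≠ x) : ¬ G.IsBridge s(x, y) := by
  rw [isBridge_iff_forall_walk_mem_edges, not_forall]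
  refine ⟨.cons hxa (.cons hab (.cons hby .nil)), ?_⟩
  simp [hay.symm, hbx.symm, hxa.ne, hby.ne']

theorem not_isBridge_of_forall_pair_ne_adj {S : Set V} (hS : 4 ≤ S.ncard)
    (hadj : ∀ a ∈ S, ∀ b ∈ S, a ≠ b → ({a, b} : Set V) ≠ {x, y} → G.Adj a b)
    (ha : a ∈ S) (hb : b ∈ S) : ¬ G.IsBridge s(a, b) := by
  have hexcept : ∃ z, ∀ c ∉ ({a, b, z} : Set V), ∀ e ∈ ({a, b} : Set V),
      ({e, c} : Set V) ≠ {x, y} := by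
    by_cases hx : x ∈ ({a, b} : Set V)
    · refine ⟨y, fun c hc e _ h ↦ ?_⟩
      have hcxy : c ∈ ({x, y} : Set V) := h.le (.inr rfl)
      grind
    · refine ⟨x, fun c hc e he h ↦ ?_⟩
      have hxec : x ∈ ({e, c} : Set V) := h.ge (.inl rfl)
      grind
  obtain ⟨z, hz⟩ := hexcept
  have hcard : ({a, b, z} : Set V).ncard < S.ncard := by
    grind [Set.ncard_insert_le, Set.ncard_singleton]
  obtain ⟨c, hc, hcabz⟩ := Set.exists_mem_notMem_of_ncard_lt_ncard hcard
  have hca : a ≠ c := fun h ↦ hcabz (.inl h.symm)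
  have hcb : b ≠ c := fun h ↦ hcabz (.inr (.inl h.symm))
  exact not_isBridge_of_adj_adj (hadj a ha c hc hca (hz c hcabz a (.inl rfl)))
    (hadj b hb c hc hcb (hz c hcabz b (.inr rfl))).symm

end Bridges

section SoleExit

/-- `pq` is the only edge of `G` leaving `S`, oriented so that `p` is its endpoint in `S`. The last
five axioms of a tail `T` say this of `T` and the edge from `w_T` to `u_T`. -/
structure IsSoleExit (G : SimpleGraph V) (S : Set V) (p q : V) : Prop where
  mem : p ∈ S
  notMem : q ∉ S
  adj : G.Adj p q
  eq_of_adj : ∀ a ∈ S, ∀ b ∉ S, G.Adj a b → a = p ∧ b = q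

variable {G : SimpleGraph V} {S U : Set V} {p q r s : V}

theorem exists_adj_of_mem_of_notMem (hG : G.Connected) (hp : p ∈ S) (hq : q ∉ S) :
    ∃ a ∈ S, ∃ b ∉ S, G.Adj a b := by
  obtain ⟨W⟩ := hG.preconnected p q
  obtain ⟨e, -, hfst, hsnd⟩ := W.exists_boundary_dart S hp hq
  exact ⟨e.fst, hfst, e.snd, hsnd, e.adj⟩

namespace IsSoleExit

theorem compl (h : IsSoleExit G S p q) : IsSoleExit G Sᶜ q p where
  mem := h.notMem
  notMem := not_not_intro h.mem
  adj := h.adj.symm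
  eq_of_adj a ha b hb hab := (h.eq_of_adj b (not_not.1 hb) a ha hab.symm).symm

theorem isBridge (h : IsSoleExit G S p q) : G.IsBridge s(p, q) := by
  rw [isBridge_iff_forall_walk_mem_edges]
  intro W
  obtain ⟨e, he, hfst, hsnd⟩ := W.exists_boundary_dart S h.mem h.notMem
  obtain ⟨rfl, rfl⟩ := h.eq_of_adj _ hfst _ hsnd e.adj
  exact List.mem_map_of_mem he

theorem subset (hG : G.Connected) (hS : IsSoleExit G S p q) (hU : IsSoleExit G U p q) : S ⊆ U := by
  intro x hxS
  by_contra hxU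
  obtain ⟨a, ⟨haS, haU⟩, b, hb, hab⟩ :=
    exists_adj_of_mem_of_notMem (S := S \ U) hG ⟨hxS, hxU⟩ fun h ↦ h.2 hU.mem
  by_cases hbS : b ∈ S
  · have hbU : b ∈ U := by_contra fun hbU ↦ hb ⟨hbS, hbU⟩
    exact hS.notMem ((hU.eq_of_adj b hbU a haU hab.symm).2 ▸ haS)
  · exact haU ((hS.eq_of_adj a haS b hbS hab).1 ▸ hU.mem)

theorem unique (hG : G.Connected) (hS : IsSoleExit G S p q) (hU : IsSoleExit G U p q) : S = U :=
  (hS.subset hG hU).antisymm (hU.subset hG hS)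

theorem exists_adj_inter_sdiff (hG : G.Connected) (hS : IsSoleExit G S p q)
    (hSU : (S ∩ U).Nonempty) (hSdU : (S \ U).Nonempty) : ∃ a ∈ S ∩ U, ∃ b ∈ S \ U, G.Adj a b := by
  obtain ⟨x, hx⟩ := hSU
  obtain ⟨y, hy⟩ := hSdU
  -- Start from the one of the two parts that does not contain `p`.
  by_cases hpU : p ∈ U
  · obtain ⟨b, hb, a, ha, hba⟩ := exists_adj_of_mem_of_notMem hG hy fun h ↦ h.2 hx.2
    have haS : a ∈ S := by_contra fun haS ↦ hb.2 ((hS.eq_of_adj b hb.1 a haS hba).1 ▸ hpU)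
    exact ⟨a, ⟨haS, by_contra fun haU ↦ ha ⟨haS, haU⟩⟩, b, hb, hba.symm⟩
  · obtain ⟨a, ha, b, hb, hab⟩ := exists_adj_of_mem_of_notMem hG hx fun h ↦ hy.2 h.2
    have hbS : b ∈ S := by_contra fun hbS ↦ hpU ((hS.eq_of_adj a ha.1 b hbS hab).1 ▸ ha.2)
    exact ⟨a, ha, b, ⟨hbS, fun hbU ↦ hb ⟨hbS, hbU⟩⟩, hab⟩

theorem mem_and_mem_of_nonempty (hG : G.Connected) (hS : IsSoleExit G S p q)
    (hU : IsSoleExit G U r s) (hSU : (S ∩ U).Nonempty) (hSdU : (S \ U).Nonempty) :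
    r ∈ S ∧ s ∈ S := by
  obtain ⟨a, ⟨haS, haU⟩, b, ⟨hbS, hbU⟩, hab⟩ := hS.exists_adj_inter_sdiff hG hSU hSdU
  obtain ⟨rfl, rfl⟩ := hU.eq_of_adj a haU b hbU hab
  exact ⟨haS, hbS⟩

end IsSoleExit

end SoleExit

namespace ComplIsMatchingOn

variable {G : SimpleGraph V} {S M : Set V} {a b : V}

theorem exists_mem_ne (h : ComplIsMatchingOn G S M) (ha : a ∈ M) : ∃ b ∈ M, b ≠ a := by
  obtain ⟨-, m, hm, -⟩ := h
  exact ⟨m a, (hm a ha).1, (hm a ha).2.1⟩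

theorem adj_of_notMem (h : ComplIsMatchingOn G S M) (ha : a ∈ S) (haM : a ∉ M) (hb : b ∈ S)
    (hab : a ≠ b) : G.Adj a b := by
  obtain ⟨-, m, -, hadj⟩ := h
  by_contra hnadj
  exact haM ((hadj a ha b hb hab).1 hnadj).1

end ComplIsMatchingOn

namespace Tail

variable {G : SimpleGraph V} {d : ℕ} (t : Tail G d) {i j : ℕ} {a b x : V}

theorem edist_v0_u0 : G.edist t.v0 t.u0 = 2 := by
  have hdist : G.dist t.v0 t.u0 = 2 := t.dist2_v0.ge rfl
  exact (ENat.toNat_eq_iff two_ne_zero).1 hdist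

theorem v0_ne_u0 : t.v0 ≠ t.u0 :=
  (edist_eq_two_iff.1 t.edist_v0_u0).1

theorem not_adj_v0_u0 : ¬ G.Adj t.v0 t.u0 :=
  (edist_eq_two_iff.1 t.edist_v0_u0).2.1

theorem commonNeighbors_u0_v0_nonempty : (G.commonNeighbors t.u0 t.v0).Nonempty := by
  rw [commonNeighbors_symm]
  exact (edist_eq_two_iff.1 t.edist_v0_u0).2.2

theorem three_le (t : Tail G d) : 3 ≤ d := by
  obtain ⟨x, hx⟩ := t.commonNeighbors_u0_v0_nonempty
  obtain ⟨y, hy, hyx⟩ := t.compl_matching.exists_mem_ne hx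
  have hseg : (t.seg 1).Finite := Set.finite_of_ncard_pos (by rw [t.seg1_card]; omega)
  have hfin : (G.commonNeighbors t.u0 t.v0).Finite :=
    hseg.subset fun z hz ↦ t.seg1 ▸ .inl (.inr hz.2)
  have hcard : ({y, x} : Set V).ncard ≤ d - 1 :=
    t.u0_nbrs ▸ Set.ncard_le_ncard (Set.pair_subset hy hx) hfin
  rw [Set.ncard_pair hyx] at hcard
  omega

theorem not_isBridge_u0 (hx : x ∈ G.commonNeighbors t.u0 t.v0) : ¬ G.IsBridge s(t.u0, x) := by
  obtain ⟨y, hy, hyx⟩ := t.compl_matching.exists_mem_ne hx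
  exact not_isBridge_of_adj_adj_adj hy.1 (G.adj_symm hy.2) hx.2 hyx t.v0_ne_u0

theorem not_isBridge_v0 (hx : G.Adj t.v0 x) : ¬ G.IsBridge s(t.v0, x) := by
  by_cases hxM : x ∈ G.commonNeighbors t.u0 t.v0
  · obtain ⟨y, hy, hyx⟩ := t.compl_matching.exists_mem_ne hxM
    exact not_isBridge_of_adj_adj_adj hy.2 (G.adj_symm hy.1) hxM.1 hyx t.v0_ne_u0.symm
  · obtain ⟨y, hy⟩ := t.commonNeighbors_u0_v0_nonempty
    have hxy : G.Adj x y := t.compl_matching.adj_of_notMem (.inr hx) hxM (.inr hy.2)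
      fun h ↦ hxM (h ▸ hy)
    exact not_isBridge_of_adj_adj hy.2 hxy.symm

theorem not_isBridge_of_mem_seg_one (ha : a ∈ t.seg 1) (hb : b ∈ t.seg 1) (hab : G.Adj a b) :
    ¬ G.IsBridge s(a, b) := by
  rw [t.seg1] at ha hb
  rcases ha with (rfl | ha) | rfl
  · exact t.not_isBridge_v0 hab
  · rcases hb with (rfl | hb) | rfl
    · exact Sym2.eq_swap ▸ t.not_isBridge_v0 ha
    · exact not_isBridge_of_adj_adj (G.adj_symm ha) hb
    · exact Sym2.eq_swap ▸ t.not_isBridge_u0 ⟨hab.symm, ha⟩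
  · rcases hb with (rfl | hb) | rfl
    · exact absurd hab.symm t.not_adj_v0_u0
    · exact t.not_isBridge_u0 ⟨hab, hb⟩
    · exact absurd rfl hab.ne

theorem not_isBridge_of_mem_seg (hj : j ∈ Set.Icc 1 t.k) (ha : a ∈ t.seg j) (hb : b ∈ t.seg j)
    (hab : G.Adj a b) : ¬ G.IsBridge s(a, b) := by
  obtain rfl | hj1 := eq_or_ne j 1
  · exact t.not_isBridge_of_mem_seg_one ha hb hab
  · have hj2 : j ∈ Set.Icc 2 t.k := ⟨by grind, hj.2⟩
    have hcard : 4 ≤ (t.seg j).ncard := by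
      rw [t.seg_card j hj2]
      exact Nat.succ_le_succ t.three_le
    exact not_isBridge_of_forall_pair_ne_adj hcard
      (fun x hx y hy hxy ↦ (t.seg_adj j hj2 x hx y hy hxy).2) ha hb

theorem mem_carrier_iff : x ∈ t.carrier ↔ ∃ j ∈ Set.Icc 1 t.k, x ∈ t.seg j := by
  simp only [t.carrier_eq, Set.mem_iUnion, exists_prop]

theorem eq_of_mem_seg (hi : i ∈ Set.Icc 1 t.k) (hj : j ∈ Set.Icc 1 t.k) (hxi : x ∈ t.seg i)
    (hxj : x ∈ t.seg j) : i = j :=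
  by_contra fun hij ↦ (t.seg_disj i hi j hj hij).notMem_of_mem_left hxi hxj

/-- The vertex of the `i`-th segment from which the tail continues, to the next segment or, for
`i = k`, out of the tail: `u` for `i = 1` and `v_i'` for `i ≥ 2`. -/
def exitVertex (i : ℕ) : V := if i = 1 then t.u0 else t.vt' i

theorem exitVertex_mem_seg (hi : i ∈ Set.Icc 1 t.k) : t.exitVertex i ∈ t.seg i := by
  rw [exitVertex]
  split_ifs with h
  · subst h
    exact t.seg1 ▸ .inr rfl
  · exact t.vt'_mem i ⟨by grind, hi.2⟩

theorem w_eq_exitVertex : t.w = t.exitVertex t.k := by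
  rw [exitVertex]
  split_ifs with h
  · exact t.w_eq_of_k_eq_one h
  · exact t.w_eq_of_k_ge_two (by have := t.k_pos; omega)

theorem adj_iff_of_lt (hi : 1 ≤ i) (hij : i < j) (hj : j ≤ t.k) (ha : a ∈ t.seg i)
    (hb : b ∈ t.seg j) : G.Adj a b ↔ j = i + 1 ∧ a = t.exitVertex i ∧ b = t.vt (i + 1) := by
  rw [t.inter_seg i ⟨hi, by omega⟩ j ⟨by omega, hj⟩ hij.ne a ha b hb, exitVertex]
  grind

theorem adj_exitVertex_vt (hi : i ∈ Set.Ico 1 t.k) : G.Adj (t.exitVertex i) (t.vt (i + 1)) :=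
  (t.adj_iff_of_lt hi.1 i.lt_succ_self hi.2 (t.exitVertex_mem_seg ⟨hi.1, hi.2.le⟩)
    (t.vt_mem _ ⟨Nat.succ_le_succ hi.1, hi.2⟩)).2 ⟨rfl, rfl, rfl⟩

theorem isSoleExit : IsSoleExit G t.carrier t.w t.uT where
  mem := t.w_mem
  notMem := t.uT_not_mem
  adj := t.w_adj_uT
  eq_of_adj a ha b hb hab := by
    obtain rfl : a = t.w := by_contra fun haw ↦ hb (t.others_in a ha haw b hab)
    exact ⟨rfl, t.w_unique_out b hab hb⟩

theorem exists_eq_of_isBridge (ha : a ∈ t.carrier) (hb : b ∈ t.carrier) (hab : G.Adj a b)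
    (hbridge : G.IsBridge s(a, b)) :
    ∃ i ∈ Set.Ico 1 t.k, s(a, b) = s(t.exitVertex i, t.vt (i + 1)) := by
  obtain ⟨i, hi, hai⟩ := t.mem_carrier_iff.1 ha
  obtain ⟨j, hj, hbj⟩ := t.mem_carrier_iff.1 hb
  rcases lt_trichotomy i j with hij | rfl | hji
  · obtain ⟨-, rfl, rfl⟩ := (t.adj_iff_of_lt hi.1 hij hj.2 hai hbj).1 hab
    exact ⟨i, ⟨hi.1, hij.trans_le hj.2⟩, rfl⟩
  · exact absurd hbridge (t.not_isBridge_of_mem_seg hi hai hbj hab)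
  · obtain ⟨-, rfl, rfl⟩ := (t.adj_iff_of_lt hj.1 hji hi.2 hbj hai).1 hab.symm
    exact ⟨j, ⟨hj.1, hji.trans_le hi.2⟩, Sym2.eq_swap⟩

theorem isSoleExit_iUnion_seg (hi : i ∈ Set.Ico 1 t.k) :
    IsSoleExit G (⋃ j ∈ Set.Icc 1 i, t.seg j) (t.exitVertex i) (t.vt (i + 1)) where
  mem := Set.mem_biUnion ⟨hi.1, le_rfl⟩ (t.exitVertex_mem_seg ⟨hi.1, hi.2.le⟩)
  notMem h := by
    obtain ⟨j, hj, hvj⟩ := Set.mem_iUnion₂.1 h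
    have hv : t.vt (i + 1) ∈ t.seg (i + 1) := t.vt_mem _ ⟨Nat.succ_le_succ hi.1, hi.2⟩
    have hji : j = i + 1 := t.eq_of_mem_seg ⟨hj.1, hj.2.trans hi.2.le⟩ ⟨by omega, hi.2⟩ hvj hv
    exact (Nat.lt_succ_of_le hj.2).ne hji
  adj := t.adj_exitVertex_vt hi
  eq_of_adj a ha b hb hab := by
    obtain ⟨j, hj, haj⟩ := Set.mem_iUnion₂.1 ha
    have hjk : j < t.k := hj.2.trans_lt hi.2
    have haw : a ≠ t.w := by
      rintro rfl
      have hwk := t.w_eq_exitVertex ▸ t.exitVertex_mem_seg ⟨t.k_pos, le_rfl⟩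
      exact hjk.ne (t.eq_of_mem_seg ⟨hj.1, hjk.le⟩ ⟨t.k_pos, le_rfl⟩ haj hwk)
    have hacarrier : a ∈ t.carrier := t.mem_carrier_iff.2 ⟨j, ⟨hj.1, hjk.le⟩, haj⟩
    obtain ⟨l, hl, hbl⟩ := t.mem_carrier_iff.1 (t.others_in a hacarrier haw b hab)
    have hil : i < l := not_le.1 fun hli ↦ hb (Set.mem_biUnion ⟨hl.1, hli⟩ hbl)
    obtain ⟨rfl, rfl, rfl⟩ := (t.adj_iff_of_lt hj.1 (hj.2.trans_lt hil) hl.2 haj hbl).1 hab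
    obtain rfl : j = i := hj.2.antisymm (Nat.le_of_lt_succ hil)
    exact ⟨rfl, rfl⟩

/-- The tail formed by the segments `R₁, …, R_i` of a tail with more than `i` segments. -/
def take (i : ℕ) (hi : i ∈ Set.Ico 1 t.k) : Tail G d :=
  have hle {n j : ℕ} (hj : j ∈ Set.Icc n i) : j ∈ Set.Icc n t.k := ⟨hj.1, hj.2.trans hi.2.le⟩
  have hexit := t.isSoleExit_iUnion_seg hi
  { t with
    carrier := ⋃ j ∈ Set.Icc 1 i, t.seg j
    k := i
    w := t.exitVertex i
    uT := t.vt (i + 1)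
    k_pos := hi.1
    carrier_eq := rfl
    seg_disj := fun a ha b hb ↦ t.seg_disj a (hle ha) b (hle hb)
    seg_card := fun a ha ↦ t.seg_card a (hle ha)
    vt_mem := fun a ha ↦ t.vt_mem a (hle ha)
    vt'_mem := fun a ha ↦ t.vt'_mem a (hle ha)
    vt_ne := fun a ha ↦ t.vt_ne a (hle ha)
    seg_adj := fun a ha ↦ t.seg_adj a (hle ha)
    inter_seg := fun a ha b hb ↦ t.inter_seg a (hle ha) b (hle hb)
    w_eq_of_k_ge_two := fun h ↦ if_neg (by omega)
    w_eq_of_k_eq_one := fun h ↦ if_pos h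
    w_mem := hexit.mem
    uT_not_mem := hexit.notMem
    w_adj_uT := hexit.adj
    w_unique_out := fun b hab hb ↦ (hexit.eq_of_adj _ hexit.mem b hb hab).2
    others_in := fun a ha haw b hab ↦
      by_contra fun hb ↦ haw (hexit.eq_of_adj a ha b hb hab).1 }

theorem take_carrier_subset (hi : i ∈ Set.Ico 1 t.k) : (t.take i hi).carrier ⊆ t.carrier := by
  rw [t.carrier_eq]
  exact Set.biUnion_subset_biUnion_left (Set.Icc_subset_Icc_right hi.2.le)

theorem isSnake_of_compl_eq (hG : G.Connected) (hreg : IsRegularGraph G d) {t t' : Tail G d}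
    (h : t.carrierᶜ = t'.carrier) : IsSnake G d := by
  have hexit : IsSoleExit G t.carrierᶜ t'.w t'.uT := h ▸ t'.isSoleExit
  obtain ⟨huw, hwu⟩ := hexit.eq_of_adj t.uT t.uT_not_mem t.w (not_not_intro t.w_mem)
    t.w_adj_uT.symm
  refine ⟨hG, hreg, t, t', h ▸ disjoint_compl_right, h ▸ Set.union_compl_self _, huw, hwu.symm, ?_⟩
  rw [← h, ← huw]
  exact t.isSoleExit.eq_of_adj

end Tail

theorem stmt13_general {V : Type*} (G : SimpleGraph V) (d : ℕ) (hconn : G.Connected)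
    (hreg : IsRegularGraph G d) (t t' : Tail G d) (hne : (t.carrier ∩ t'.carrier).Nonempty) :
    IsSnake G d ∨ t.carrier ⊆ t'.carrier ∨ t'.carrier ⊆ t.carrier := by
  by_cases hsub : t'.carrier ⊆ t.carrier
  · exact .inr (.inr hsub)
  obtain ⟨hw, hu⟩ : t.w ∈ t'.carrier ∧ t.uT ∈ t'.carrier :=
    t'.isSoleExit.mem_and_mem_of_nonempty hconn t.isSoleExit (Set.inter_comm _ _ ▸ hne)
      (Set.sdiff_nonempty.2 hsub)
  obtain ⟨i, hi, hlink⟩ := t'.exists_eq_of_isBridge hw hu t.w_adj_uT t.isSoleExit.isBridge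
  have hexit := t'.isSoleExit_iUnion_seg hi
  rcases Sym2.eq_iff.1 hlink with ⟨hwi, hui⟩ | ⟨hwi, hui⟩
  · rw [← hwi, ← hui] at hexit
    exact .inr (.inl (t.isSoleExit.unique hconn hexit ▸ t'.take_carrier_subset hi))
  · rw [← hwi, ← hui] at hexit
    have hcompl : t.carrierᶜ = (t'.take i hi).carrier := t.isSoleExit.compl.unique hconn hexit
    exact .inl (Tail.isSnake_of_compl_eq hconn hreg hcompl)

/-- Let `d > 6` be odd and `G` connected `d`-regular with `G²` not
complete. If `T` and `T'` are tails of `G` with nonempty intersection, then either `G` is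
a snake graph or one of `T`, `T'` is contained in the other. -/
theorem stmt13 {V : Type*} [Fintype V] (G : SimpleGraph V) (d : ℕ) (hd : 6 < d)
    (hodd : Odd d) (hconn : G.Connected) (hreg : IsRegularGraph G d)
    (hnotcomplete : graphSquare G ≠ ⊤)
    (t t' : Tail G d) (hne : (t.carrier ∩ t'.carrier).Nonempty) :
    IsSnake G d ∨ t.carrier ⊆ t'.carrier ∨ t'.carrier ⊆ t.carrier :=
  stmt13_general G d hconn hreg t t' hne
end

section
/- Let d > 6 be even and let G be a peanut graph of degree d. Then G has exactly n = 2d + 3 vertices, and ∑_{v ∈ V(G)} deg₂(v) = 7d − 4; equivalently, e(G²) − e(G) = (7d − 4)/2. -/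
open SimpleGraph

variable {V : Type*}

/-- A peanut graph : a connected `d`-regular graph (`d` even) partitioned into `R₁` of size
`d+1` whose induced complement is the single edge `w₁w₂`, and `R₂` of size `d+2` whose
induced complement is a star `uv₁, uv₂, uv₃` plus a perfect matching on the remaining
vertices, the only edges between the parts being `uw₁` and `uw₂`. -/
def IsPeanut (G : SimpleGraph V) (d : ℕ) : Prop :=
  G.Connected ∧ IsRegularGraph G d ∧ Even d ∧
  ∃ (R1 R2 : Set V) (w1 w2 u v1 v2 v3 : V),
    Disjoint R1 R2 ∧ R1 ∪ R2 = Set.univ ∧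
    R1.ncard = d + 1 ∧ R2.ncard = d + 2 ∧
    w1 ∈ R1 ∧ w2 ∈ R1 ∧ w1 ≠ w2 ∧
    u ∈ R2 ∧ v1 ∈ R2 ∧ v2 ∈ R2 ∧ v3 ∈ R2 ∧
    ([u, v1, v2, v3].Pairwise (· ≠ ·)) ∧
    (∀ a ∈ R1, ∀ b ∈ R1, a ≠ b → (¬ G.Adj a b ↔ ({a, b} : Set V) = {w1, w2})) ∧
    (∃ m : V → V,
      (∀ x ∈ R2 \ {u, v1, v2, v3}, m x ∈ R2 \ {u, v1, v2, v3} ∧ m x ≠ x ∧ m (m x) = x) ∧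
      (∀ a ∈ R2, ∀ b ∈ R2, a ≠ b →
        (¬ G.Adj a b ↔ (({a, b} : Set V) = {u, v1} ∨ ({a, b} : Set V) = {u, v2} ∨
          ({a, b} : Set V) = {u, v3} ∨ (a ∈ R2 \ {u, v1, v2, v3} ∧ b = m a))))) ∧
    (∀ a ∈ R1, ∀ b ∈ R2, (G.Adj a b ↔ (b = u ∧ (a = w1 ∨ a = w2))))

/-!
A peanut graph is a chain of five layers: `R₁ \ {w₁, w₂}`, `{w₁, w₂}`, `{u}`, the matched vertices
of `R₂`, and `{v₁, v₂, v₃}`, of sizes `d - 1`, `2`, `1`, `d - 2`, `3`. Consecutive layers are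
completely joined and no edge skips a layer. In a connected graph of this shape, with at least two
layers, two vertices are at distance two exactly when their layers are two apart, or when they are
nonadjacent vertices of the same layer. The second case occurs only for `w₁, w₂` and for the
`d / 2 - 1` matched pairs, so counting ordered pairs gives
`2 * ((d - 1) * 1 + 2 * (d - 2) + 1 * 3) + 2 + (d - 2) = 7 * d - 4`.
-/

theorem dist_eq_two_iff_compl_adj {G : SimpleGraph V} {x y : V} :
    G.dist x y = 2 ↔ Gᶜ.Adj x y ∧ (G.commonNeighbors x y).Nonempty := by
  rw [SimpleGraph.dist, ENat.toNat_eq_iff two_ne_zero, Nat.cast_ofNat, edist_eq_two_iff,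
    compl_adj, and_assoc]

theorem two_mul_ncard_edgeSet [Fintype V] (G : SimpleGraph V) :
    2 * G.edgeSet.ncard = ∑ v, (G.neighborSet v).ncard := by
  classical
  rw [← coe_edgeFinset, Set.ncard_coe_finset, ← G.sum_degrees_eq_twice_card_edges]
  simp only [← coe_neighborFinset, Set.ncard_coe_finset, card_neighborFinset_eq_degree]

theorem ncard_neighborSet_graphSquare [Finite V] (G : SimpleGraph V) (v : V) :
    ((graphSquare G).neighborSet v).ncard = (G.neighborSet v).ncard + deg2 G v := by
  have disjoint_neighborSet_distSet : Disjoint (G.neighborSet v) (distSet G v 2) := by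
    rw [Set.disjoint_left]
    intro x hx hx₂
    exact (dist_eq_two_iff_compl_adj.mp hx₂).1.2 hx
  rw [deg2, ← Set.ncard_union_eq disjoint_neighborSet_distSet]
  congr 1
  ext x
  simp only [mem_neighborSet, graphSquare, distSet, Set.mem_union, Set.mem_ofPred_eq,
    ← dist_eq_one_iff_adj]
  lia

theorem two_mul_ncard_edgeSet_graphSquare [Fintype V] (G : SimpleGraph V) :
    2 * (graphSquare G).edgeSet.ncard = 2 * G.edgeSet.ncard + ∑ v, deg2 G v := by
  simp only [two_mul_ncard_edgeSet, ncard_neighborSet_graphSquare, Finset.sum_add_distrib]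

/-- A map `ℓ` to the integers exhibiting `G` as a chain of layers: vertices in consecutive layers
are adjacent, and adjacent vertices lie in the same or in consecutive layers. Adjacency inside a
layer is unconstrained. The layers are indexed by `ℤ` so that `ℓ x - 2` is never truncated. -/
structure IsCompleteLayering (G : SimpleGraph V) (ℓ : V → ℤ) : Prop where
  adj_of_abs_sub_eq_one : ∀ {x y : V}, |ℓ x - ℓ y| = 1 → G.Adj x y
  abs_sub_le_one_of_adj : ∀ {x y : V}, G.Adj x y → |ℓ x - ℓ y| ≤ 1

/-- The vertices in the layer of `x`, other than `x` itself, that are not adjacent to `x`. -/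
def layerNonneighbors (G : SimpleGraph V) (ℓ : V → ℤ) (x : V) : Set V :=
  {y | ℓ y = ℓ x ∧ Gᶜ.Adj x y}

namespace IsCompleteLayering

variable {G : SimpleGraph V} {ℓ : V → ℤ}

theorem exists_level_eq_add_one (hℓ : IsCompleteLayering G ℓ) (hG : G.Preconnected) {x y : V}
    (hxy : ℓ x < ℓ y) : ∃ z, ℓ z = ℓ x + 1 := by
  obtain ⟨p⟩ := hG x y
  obtain ⟨e, -, he_fst, he_snd⟩ := p.exists_boundary_dart {z | ℓ z ≤ ℓ x} (le_refl (ℓ x))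
    hxy.not_ge
  have level_step := abs_le.mp (hℓ.abs_sub_le_one_of_adj e.adj)
  rw [Set.mem_ofPred_eq] at he_fst he_snd
  exact ⟨e.snd, by lia⟩

theorem commonNeighbors_nonempty_of_level_eq (hℓ : IsCompleteLayering G ℓ) (hG : G.Preconnected)
    {x y z : V} (hxy : ℓ x = ℓ y) (hz : ℓ z ≠ ℓ x) : (G.commonNeighbors x y).Nonempty := by
  obtain ⟨p⟩ := hG x z
  obtain ⟨e, -, he_fst : ℓ e.fst = ℓ x, he_snd : ℓ e.snd ≠ ℓ x⟩ :=
    p.exists_boundary_dart {z | ℓ z = ℓ x} rfl hz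
  have level_step : |ℓ x - ℓ e.snd| = 1 := by
    have level_step_le := hℓ.abs_sub_le_one_of_adj e.adj
    grind
  exact ⟨e.snd, hℓ.adj_of_abs_sub_eq_one level_step,
    hℓ.adj_of_abs_sub_eq_one (hxy ▸ level_step)⟩

theorem commonNeighbors_nonempty_of_level_eq_add_two (hℓ : IsCompleteLayering G ℓ)
    (hG : G.Preconnected) {x y : V} (hxy : ℓ y = ℓ x + 2) : (G.commonNeighbors x y).Nonempty := by
  obtain ⟨z, hz⟩ := hℓ.exists_level_eq_add_one hG (x := x) (y := y) (by lia)
  exact ⟨z, hℓ.adj_of_abs_sub_eq_one (by grind), hℓ.adj_of_abs_sub_eq_one (by grind)⟩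

theorem compl_adj_of_one_lt_abs_sub (hℓ : IsCompleteLayering G ℓ) {x y : V}
    (hxy : 1 < |ℓ x - ℓ y|) : Gᶜ.Adj x y := by
  refine ⟨?_, fun h => hxy.not_ge (hℓ.abs_sub_le_one_of_adj h)⟩
  rintro rfl
  simp at hxy

theorem distSet_two_eq (hℓ : IsCompleteLayering G ℓ) (hG : G.Preconnected) {x z : V}
    (hz : ℓ z ≠ ℓ x) : distSet G x 2 =
      ℓ ⁻¹' {ℓ x + 2} ∪ ℓ ⁻¹' {ℓ x - 2} ∪ layerNonneighbors G ℓ x := by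
  ext y
  simp only [distSet, layerNonneighbors, Set.mem_ofPred_eq, Set.mem_union, Set.mem_preimage,
    Set.mem_singleton_iff, dist_eq_two_iff_compl_adj]
  constructor
  · rintro ⟨hxy, c, hxc, hyc⟩
    have level_x := hℓ.abs_sub_le_one_of_adj hxc
    have level_y := hℓ.abs_sub_le_one_of_adj hyc
    have level_ne : |ℓ x - ℓ y| ≠ 1 := fun h => hxy.2 (hℓ.adj_of_abs_sub_eq_one h)
    grind
  · rintro ((hy | hy) | ⟨hy, hxy⟩)
    · exact ⟨hℓ.compl_adj_of_one_lt_abs_sub (by grind),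
        hℓ.commonNeighbors_nonempty_of_level_eq_add_two hG hy⟩
    · rw [commonNeighbors_symm]
      exact ⟨hℓ.compl_adj_of_one_lt_abs_sub (by grind),
        hℓ.commonNeighbors_nonempty_of_level_eq_add_two hG (by lia)⟩
    · exact ⟨hxy, hℓ.commonNeighbors_nonempty_of_level_eq hG hy.symm hz⟩

theorem deg2_eq [Finite V] (hℓ : IsCompleteLayering G ℓ) (hG : G.Preconnected) {x z : V}
    (hz : ℓ z ≠ ℓ x) : deg2 G x =
      (ℓ ⁻¹' {ℓ x + 2}).ncard + (ℓ ⁻¹' {ℓ x - 2}).ncard + (layerNonneighbors G ℓ x).ncard := by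
  rw [deg2, hℓ.distSet_two_eq hG hz, Set.ncard_union_eq, Set.ncard_union_eq]
  all_goals
    rw [Set.disjoint_left]
    simp only [layerNonneighbors, Set.mem_union, Set.mem_preimage, Set.mem_singleton_iff,
      Set.mem_ofPred_eq]
    lia

theorem sum_deg2 [Fintype V] (hℓ : IsCompleteLayering G ℓ) (hG : G.Preconnected)
    (hne : ∀ x, ∃ z, ℓ z ≠ ℓ x) {k : ℤ → ℕ}
    (hk : ∀ x, (layerNonneighbors G ℓ x).ncard = k (ℓ x)) {s : Finset ℤ} (hs : ∀ x, ℓ x ∈ s) :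
    ∑ x, deg2 G x = ∑ i ∈ s, (ℓ ⁻¹' {i}).ncard *
      ((ℓ ⁻¹' {i + 2}).ncard + (ℓ ⁻¹' {i - 2}).ncard + k i) := by
  have deg2_eq_of_level (x : V) : deg2 G x =
      (ℓ ⁻¹' {ℓ x + 2}).ncard + (ℓ ⁻¹' {ℓ x - 2}).ncard + k (ℓ x) := by
    obtain ⟨z, hz⟩ := hne x
    rw [hℓ.deg2_eq hG hz, hk]
  simp only [deg2_eq_of_level]
  rw [← Finset.sum_fiberwise_of_maps_to' (fun x _ => hs x)
    fun i => (ℓ ⁻¹' {i + 2}).ncard + (ℓ ⁻¹' {i - 2}).ncard + k i]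
  refine Finset.sum_congr rfl fun i _ => ?_
  rw [Finset.sum_const, smul_eq_mul, ← Set.ncard_coe_finset]
  congr 2
  ext x
  simp

end IsCompleteLayering

/-- A decomposition of `G` as a peanut of degree `d`, with the parts named as sets: `R₂` is the
complement of `R₁`, `W` is the pair `{w₁, w₂}`, `T` is the set `{v₁, v₂, v₃}` of leaves of the star
centred at `u`, and `mate` is the fixed-point-free map that pairs up the set `M` of the remaining
vertices of `R₂`. That `mate` is an involution on `M` follows from the symmetry of adjacency. -/
structure PeanutDecomposition (G : SimpleGraph V) (d : ℕ) where
  R₁ : Set V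
  W : Set V
  u : V
  T : Set V
  M : Set V
  mate : V → V
  mem_M_iff : ∀ x, x ∈ M ↔ x ∉ R₁ ∧ x ≠ u ∧ x ∉ T
  W_subset_R₁ : W ⊆ R₁
  u_notMem_R₁ : u ∉ R₁
  T_subset_compl_R₁ : T ⊆ R₁ᶜ
  u_notMem_T : u ∉ T
  ncard_R₁ : R₁.ncard = d + 1
  ncard_compl_R₁ : R₁ᶜ.ncard = d + 2
  ncard_W : W.ncard = 2
  ncard_T : T.ncard = 3
  mate_mem : ∀ x ∈ M, mate x ∈ M
  mate_ne : ∀ x ∈ M, mate x ≠ x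
  adj_R₁_iff : ∀ x ∈ R₁, ∀ y ∈ R₁, G.Adj x y ↔ x ≠ y ∧ ¬(x ∈ W ∧ y ∈ W)
  adj_compl_R₁_iff : ∀ x ∉ R₁, ∀ y ∉ R₁, G.Adj x y ↔
    x ≠ y ∧ ¬(x = u ∧ y ∈ T) ∧ ¬(x ∈ T ∧ y = u) ∧ ¬(x ∈ M ∧ y = mate x)
  adj_R₁_compl_R₁_iff : ∀ x ∈ R₁, ∀ y ∉ R₁, G.Adj x y ↔ x ∈ W ∧ y = u

namespace PeanutDecomposition

variable {G : SimpleGraph V} {d : ℕ}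

open Classical in
/-- The index of the layer of a vertex in the complete layering of a peanut by the sets
`R₁ \ {w₁, w₂}`, `{w₁, w₂}`, `{u}`, the matched vertices and `{v₁, v₂, v₃}`, in this order. -/
noncomputable def level (P : PeanutDecomposition G d) (x : V) : ℤ :=
  if x ∈ P.R₁ then (if x ∈ P.W then 1 else 0)
  else if x = P.u then 2 else if x ∈ P.T then 4 else 3

theorem level_mem_Icc (P : PeanutDecomposition G d) (x : V) : P.level x ∈ Finset.Icc 0 4 := by
  unfold level
  split_ifs <;> simp

theorem level_preimage_zero (P : PeanutDecomposition G d) : P.level ⁻¹' {0} = P.R₁ \ P.W := by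
  ext x
  grind [level]

theorem level_preimage_one (P : PeanutDecomposition G d) : P.level ⁻¹' {1} = P.W := by
  ext x
  grind [level, P.W_subset_R₁]

theorem level_preimage_two (P : PeanutDecomposition G d) : P.level ⁻¹' {2} = {P.u} := by
  ext x
  grind [level, P.u_notMem_R₁]

theorem level_preimage_three (P : PeanutDecomposition G d) : P.level ⁻¹' {3} = P.M := by
  ext x
  grind [level, P.mem_M_iff]

theorem level_preimage_four (P : PeanutDecomposition G d) : P.level ⁻¹' {4} = P.T := by
  ext x
  grind [level, P.T_subset_compl_R₁, P.u_notMem_T]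

theorem adj_iff (P : PeanutDecomposition G d) (x y : V) :
    G.Adj x y ↔ |P.level x - P.level y| = 1 ∨
      (P.level x = P.level y ∧ x ≠ y ∧ ¬(x ∈ P.W ∧ y ∈ P.W) ∧ ¬(x ∈ P.M ∧ y = P.mate x)) := by
  by_cases hx : x ∈ P.R₁ <;> by_cases hy : y ∈ P.R₁
  · rw [P.adj_R₁_iff x hx y hy]
    grind [level, P.mem_M_iff]
  · rw [P.adj_R₁_compl_R₁_iff x hx y hy]
    grind [level]
  · rw [G.adj_comm, P.adj_R₁_compl_R₁_iff y hy x hx]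
    grind [level]
  · rw [P.adj_compl_R₁_iff x hx y hy]
    have mate_mem_M : x ∈ P.M → P.mate x ∈ P.M := P.mate_mem x
    grind [level, P.mem_M_iff, P.W_subset_R₁]

theorem isCompleteLayering (P : PeanutDecomposition G d) : IsCompleteLayering G P.level where
  adj_of_abs_sub_eq_one h := (P.adj_iff _ _).mpr (.inl h)
  abs_sub_le_one_of_adj h := by
    obtain h | ⟨h, -⟩ := (P.adj_iff _ _).mp h
    · exact h.le
    · simp [h]

theorem layerNonneighbors_eq_of_mem_W (P : PeanutDecomposition G d) {x : V} (hx : x ∈ P.W) :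
    layerNonneighbors G P.level x = P.W \ {x} := by
  ext y
  rw [layerNonneighbors, Set.mem_ofPred_eq, compl_adj, P.adj_iff]
  grind [level, P.W_subset_R₁, P.mem_M_iff]

theorem layerNonneighbors_eq_of_mem_M (P : PeanutDecomposition G d) {x : V} (hx : x ∈ P.M) :
    layerNonneighbors G P.level x = {P.mate x} := by
  ext y
  rw [layerNonneighbors, Set.mem_ofPred_eq, compl_adj, P.adj_iff]
  have mate_mem_M : P.mate x ∈ P.M := P.mate_mem x hx
  have mate_ne : P.mate x ≠ x := P.mate_ne x hx
  grind [level, P.W_subset_R₁, P.mem_M_iff]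

theorem layerNonneighbors_eq_empty (P : PeanutDecomposition G d) {x : V} (hW : x ∉ P.W)
    (hM : x ∉ P.M) : layerNonneighbors G P.level x = ∅ := by
  ext y
  rw [layerNonneighbors, Set.mem_ofPred_eq, compl_adj, P.adj_iff]
  grind

theorem ncard_layerNonneighbors (P : PeanutDecomposition G d) (x : V) :
    (layerNonneighbors G P.level x).ncard = if P.level x = 1 ∨ P.level x = 3 then 1 else 0 := by
  have level_eq_one_iff : P.level x = 1 ↔ x ∈ P.W := Set.ext_iff.mp P.level_preimage_one x
  have level_eq_three_iff : P.level x = 3 ↔ x ∈ P.M := Set.ext_iff.mp P.level_preimage_three x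
  split_ifs with hx <;> rw [level_eq_one_iff, level_eq_three_iff] at hx
  · obtain hW | hM := hx
    · rw [P.layerNonneighbors_eq_of_mem_W hW, Set.ncard_sdiff_singleton_of_mem hW, P.ncard_W]
    · rw [P.layerNonneighbors_eq_of_mem_M hM, Set.ncard_singleton]
  · rw [not_or] at hx
    rw [P.layerNonneighbors_eq_empty hx.1 hx.2, Set.ncard_empty]

theorem exists_level_ne (P : PeanutDecomposition G d) (x : V) : ∃ z, P.level z ≠ P.level x := by
  have level_u : P.level P.u = 2 := (Set.ext_iff.mp P.level_preimage_two P.u).mpr rfl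
  obtain ⟨w, hw⟩ : P.W.Nonempty := Set.nonempty_of_ncard_ne_zero (by simp [P.ncard_W])
  have level_w : P.level w = 1 := (Set.ext_iff.mp P.level_preimage_one w).mpr hw
  by_cases hx : P.level x = 2
  · exact ⟨w, by lia⟩
  · exact ⟨P.u, by lia⟩

theorem natCard_eq [Finite V] (P : PeanutDecomposition G d) : Nat.card V = 2 * d + 3 := by
  rw [← Set.ncard_add_ncard_compl P.R₁, P.ncard_R₁, P.ncard_compl_R₁]
  lia

theorem ncard_R₁_diff_W (P : PeanutDecomposition G d) : (P.R₁ \ P.W).ncard = d - 1 := by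
  have finite_W : P.W.Finite := Set.finite_of_ncard_ne_zero (by simp [P.ncard_W])
  rw [Set.ncard_sdiff P.W_subset_R₁ finite_W, P.ncard_R₁, P.ncard_W]
  lia

theorem ncard_M_add_two (P : PeanutDecomposition G d) : P.M.ncard + 2 = d := by
  have M_eq : P.M = P.R₁ᶜ \ insert P.u P.T := by
    ext x
    grind [P.mem_M_iff]
  have finite_compl_R₁ : P.R₁ᶜ.Finite := Set.finite_of_ncard_ne_zero (by simp [P.ncard_compl_R₁])
  have finite_T : P.T.Finite := Set.finite_of_ncard_ne_zero (by simp [P.ncard_T])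
  have ncard_add : P.M.ncard + (insert P.u P.T).ncard = P.R₁ᶜ.ncard :=
    M_eq ▸ Set.ncard_sdiff_add_ncard_of_subset
      (Set.insert_subset P.u_notMem_R₁ P.T_subset_compl_R₁) finite_compl_R₁
  rw [Set.ncard_insert_of_notMem P.u_notMem_T finite_T, P.ncard_T, P.ncard_compl_R₁] at ncard_add
  lia

theorem sum_deg2 [Fintype V] (P : PeanutDecomposition G d) (hG : G.Preconnected) :
    ∑ v, deg2 G v = 7 * d - 4 := by
  have layer_empty {i : ℤ} (hi : i ∉ Finset.Icc 0 4) : P.level ⁻¹' {i} = ∅ :=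
    Set.preimage_singleton_eq_empty.mpr fun ⟨x, hx⟩ => hi (hx ▸ P.level_mem_Icc x)
  have ncard_M := P.ncard_M_add_two
  calc ∑ v, deg2 G v
    _ = ∑ i ∈ {0, 1, 2, 3, 4}, (P.level ⁻¹' {i}).ncard * ((P.level ⁻¹' {i + 2}).ncard +
          (P.level ⁻¹' {i - 2}).ncard + if i = 1 ∨ i = 3 then 1 else 0) :=
      P.isCompleteLayering.sum_deg2 hG P.exists_level_ne P.ncard_layerNonneighbors P.level_mem_Icc
    _ = (d - 1) * 1 + (2 * (P.M.ncard + 1) + ((3 + (d - 1)) + (P.M.ncard * (2 + 1) + 3 * 1))) := by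
      simp [level_preimage_zero, level_preimage_one, level_preimage_two, level_preimage_three,
        level_preimage_four, ncard_R₁_diff_W, ncard_W, ncard_T, layer_empty]
    _ = 7 * d - 4 := by lia

end PeanutDecomposition

theorem IsPeanut.nonempty_peanutDecomposition {G : SimpleGraph V} {d : ℕ} (h : IsPeanut G d) :
    Nonempty (PeanutDecomposition G d) := by
  obtain ⟨-, -, -, R₁, R₂, w₁, w₂, u, v₁, v₂, v₃, hdisj, hunion, hR₁, hR₂, hw₁, hw₂, hw, hu,
    hv₁, hv₂, hv₃, hne, hadj₁, ⟨mate, hmate, hadj₂⟩, hadj₁₂⟩ := h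
  obtain rfl : R₂ = R₁ᶜ := (IsCompl.compl_eq ⟨hdisj, codisjoint_iff.mpr hunion⟩).symm
  simp only [List.pairwise_cons, List.mem_cons, List.not_mem_nil, or_false, forall_eq_or_imp,
    forall_eq, false_imp_iff, implies_true, List.Pairwise.nil, and_true] at hne
  obtain ⟨⟨huv₁, huv₂, huv₃⟩, ⟨hv₁₂, hv₁₃⟩, hv₂₃⟩ := hne
  refine ⟨{
    R₁ := R₁
    W := {w₁, w₂}
    u := u
    T := {v₁, v₂, v₃}
    M := R₁ᶜ \ {u, v₁, v₂, v₃}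
    mate := mate
    mem_M_iff := by simp
    W_subset_R₁ := Set.pair_subset hw₁ hw₂
    u_notMem_R₁ := hu
    T_subset_compl_R₁ := Set.insert_subset hv₁ (Set.pair_subset hv₂ hv₃)
    u_notMem_T := by simp [huv₁, huv₂, huv₃]
    ncard_R₁ := hR₁
    ncard_compl_R₁ := hR₂
    ncard_W := Set.ncard_pair hw
    ncard_T := Set.ncard_eq_three.mpr ⟨v₁, v₂, v₃, hv₁₂, hv₁₃, hv₂₃, rfl⟩
    mate_mem := fun x hx => (hmate x hx).1
    mate_ne := fun x hx => (hmate x hx).2.1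
    adj_R₁_iff := fun x hx y hy => ?_
    adj_compl_R₁_iff := fun x hx y hy => ?_
    adj_R₁_compl_R₁_iff := fun x hx y hy => ?_ }⟩
  · by_cases hxy : x = y
    · simp [hxy]
    · have h := hadj₁ x hx y hy hxy
      rw [Set.pair_eq_pair_iff] at h
      grind
  · by_cases hxy : x = y
    · simp [hxy]
    · have h := hadj₂ x hx y hy hxy
      simp only [Set.pair_eq_pair_iff] at h
      grind
  · rw [hadj₁₂ x hx y hy, and_comm, Set.mem_insert_iff, Set.mem_singleton_iff]

theorem stmt16_general {V : Type*} [Fintype V] (G : SimpleGraph V) (d : ℕ)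
    (hpeanut : IsPeanut G d) :
    Fintype.card V = 2 * d + 3 ∧
      ((∑ v : V, deg2 G v) = 7 * d - 4) ∧
      2 * (graphSquare G).edgeSet.ncard = 2 * G.edgeSet.ncard + (7 * d - 4) := by
  obtain ⟨P⟩ := hpeanut.nonempty_peanutDecomposition
  have sum_deg2_eq := P.sum_deg2 hpeanut.1.preconnected
  refine ⟨?_, sum_deg2_eq, ?_⟩
  · rw [← Nat.card_eq_fintype_card, P.natCard_eq]
  · rw [two_mul_ncard_edgeSet_graphSquare, sum_deg2_eq]

/-- Let `d > 6` be even and `G` a peanut graph of degree `d`. Then `G`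
has exactly `2d + 3` vertices, `∑_v deg₂(v) = 7d - 4`, and equivalently
`2 e(G²) = 2 e(G) + 7d - 4`. -/
theorem stmt16 {V : Type*} [Fintype V] (G : SimpleGraph V) (d : ℕ) (hd : 6 < d)
    (heven : Even d) (hpeanut : IsPeanut G d) :
    Fintype.card V = 2 * d + 3 ∧
      ((∑ v : V, deg2 G v) = 7 * d - 4) ∧
      2 * (graphSquare G).edgeSet.ncard = 2 * G.edgeSet.ncard + (7 * d - 4) :=
  stmt16_general G d hpeanut
end
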